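/- arXiv:2102.12318 — 2 statements merged into one kernel-verified Lean document; each statement's English description precedes it below -/
import Mathlib

section
/- Fix ε ∈ [0,1) and let Γ*_ε be a measurable set-valued classifier such that for every x ∈ 𝒳, |Γ*_ε(x)| = k_ε(x) and p_ℓ(x) ≥ p_m(x) whenever ℓ ∈ Γ*_ε(x) and m ∉ Γ*_ε(x) (i.e. Γ*_ε(x) consists of the k_ε(x) most probable classes at x). Then (i) ∑_{ℓ ∈ Γ*_ε(x)} p_ℓ(x) ≥ 1 − ε for every x, so Γ*_ε satisfies the point-wise error constraint P(Y ∉ Γ(X) | X = x) ≤ ε; and (ii) for every set-valued classifier Γ satisfying ∑_{ℓ ∈ Γ(x)} p_ℓ(x) ≥ 1 − ε for every x, one has |Γ*_ε(x)| ≤ |Γ(x)| for every x, and consequently size(Γ*_ε) ≤ size(Γ). -/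
open MeasureTheory Finset

/-- `sortedDesc q j` is the (j+1)-th largest value among `q 0, …, q (L-1)`. -/
noncomputable def sortedDesc {L : ℕ} (q : Fin L → ℝ) : Fin L → ℝ :=
  fun j => q (Tuple.sort q j.rev)

/-- Sum of the `k` largest values of `q`. -/
noncomputable def topSum {L : ℕ} (q : Fin L → ℝ) (k : ℕ) : ℝ :=
  ∑ j ∈ Finset.univ.filter (fun j : Fin L => (j : ℕ) < k), sortedDesc q j

/-- `kEps L q ε` = min{k ∈ {1,…,L} : sum of k largest values of q ≥ 1 - ε}. -/
noncomputable def kEps (L : ℕ) (q : Fin L → ℝ) (ε : ℝ) : ℕ :=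
  sInf {k : ℕ | 1 ≤ k ∧ k ≤ L ∧ 1 - ε ≤ topSum q k}

/-!
By exchange, a set of most probable classes has the largest total weight among all sets of its
size, so this weight is the sum of the `k` largest weights, where `k` is its size. At size `k_ε`
that sum is at least `1 - ε` by the choice of `k_ε`. Conversely, if a set of size `k` has weight at
least `1 - ε`, then so does a set of `k` most probable classes, whence `k_ε ≤ k`.
-/

/-- `A` collects largest values of `q`: no value outside `A` exceeds a value in `A`. Among tied
values the choice is free, so there may be several such sets of the same size. -/
def IsTopSet {ι M : Type*} [LE M] (q : ι → M) (A : Finset ι) : Prop :=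
  ∀ i ∈ A, ∀ j, j ∉ A → q j ≤ q i

theorem IsTopSet.sum_le_sum {ι M : Type*} [AddCommMonoid M] [PartialOrder M] [IsOrderedAddMonoid M]
    {q : ι → M} {A B : Finset ι} (hA : IsTopSet q A) (hcard : #B = #A) :
    ∑ i ∈ B, q i ≤ ∑ i ∈ A, q i := by
  classical
  let e : ↥(B \ A) ≃ ↥(A \ B) := equivOfCardEq (card_sdiff_comm hcard)
  have sum_sdiff_le : ∑ i ∈ B \ A, q i ≤ ∑ i ∈ A \ B, q i :=
    calc ∑ i ∈ B \ A, q i = ∑ i : ↥(B \ A), q i := (sum_coe_sort _ _).symm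
      _ ≤ ∑ i : ↥(B \ A), q (e i) := Finset.sum_le_sum fun i _ =>
          hA _ (mem_sdiff.1 (e i).2).1 _ (mem_sdiff.1 i.2).2
      _ = ∑ i : ↥(A \ B), q i := e.sum_comp fun i => q i
      _ = ∑ i ∈ A \ B, q i := sum_coe_sort _ _
  rw [← sum_inter_add_sum_sdiff B A, ← sum_inter_add_sum_sdiff A B, inter_comm]
  gcongr

section TopSum

variable {L : ℕ} (q : Fin L → ℝ)

/-- The indices of the `k` largest values of `q`, with ties broken by `Tuple.sort`; all indices
if `L < k`. It realizes `topSum q k` as a sum over a set of indices. -/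
noncomputable def topSet (k : ℕ) : Finset (Fin L) :=
  (univ.filter fun j : Fin L => (j : ℕ) < k).map (Fin.revPerm.trans (Tuple.sort q)).toEmbedding

theorem card_topSet (k : ℕ) : #(topSet q k) = min L k := by
  rw [topSet, card_map, Fin.card_filter_val_lt]

theorem sum_topSet (k : ℕ) : ∑ i ∈ topSet q k, q i = topSum q k :=
  sum_map _ _ _

theorem isTopSet_topSet (k : ℕ) : IsTopSet q (topSet q k) := by
  intro i hi j hj
  obtain ⟨a, rfl⟩ := (Fin.revPerm.trans (Tuple.sort q)).surjective i
  obtain ⟨b, rfl⟩ := (Fin.revPerm.trans (Tuple.sort q)).surjective j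
  simp only [topSet, mem_map_equiv, Equiv.symm_apply_apply, mem_filter_univ] at hi hj
  have hab : a ≤ b := Fin.le_def.2 (by omega)
  exact Tuple.monotone_sort q (Fin.rev_le_rev.2 hab)

variable {q}

theorem sum_le_topSum (B : Finset (Fin L)) : ∑ i ∈ B, q i ≤ topSum q #B := by
  have hcard : #B = #(topSet q #B) := by
    rw [card_topSet, min_eq_right (card_finset_fin_le B)]
  exact ((isTopSet_topSet q #B).sum_le_sum hcard).trans_eq (sum_topSet q #B)

theorem IsTopSet.sum_eq_topSum {A : Finset (Fin L)} (hA : IsTopSet q A) :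
    ∑ i ∈ A, q i = topSum q #A := by
  refine (sum_le_topSum A).antisymm ?_
  rw [← sum_topSet]
  exact hA.sum_le_sum (by rw [card_topSet, min_eq_right (card_finset_fin_le A)])

end TopSum

section KEps

variable {L : ℕ} {q : Fin L → ℝ} {ε : ℝ} {B : Finset (Fin L)}

theorem card_mem_kEps_candidates (hε : ε < 1) (hB : 1 - ε ≤ ∑ i ∈ B, q i) :
    #B ∈ {k : ℕ | 1 ≤ k ∧ k ≤ L ∧ 1 - ε ≤ topSum q k} := by
  have hpos : 0 < ∑ i ∈ B, q i := (sub_pos.2 hε).trans_le hB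
  exact ⟨(nonempty_of_sum_ne_zero hpos.ne').card_pos, card_finset_fin_le B,
    hB.trans (sum_le_topSum B)⟩

theorem kEps_le_card (hε : ε < 1) (hB : 1 - ε ≤ ∑ i ∈ B, q i) : kEps L q ε ≤ #B :=
  Nat.sInf_le (card_mem_kEps_candidates hε hB)

theorem one_sub_le_topSum_kEps (hε : ε < 1) (hB : 1 - ε ≤ ∑ i ∈ B, q i) :
    1 - ε ≤ topSum q (kEps L q ε) :=
  (Nat.sInf_mem (Set.nonempty_of_mem (card_mem_kEps_candidates hε hB))).2.2

end KEps

theorem integrable_card_of_measurable {𝒳 ι : Type*} [MeasurableSpace 𝒳] {μ : Measure 𝒳}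
    [IsFiniteMeasure μ] [Finite ι] [MeasurableSpace (Finset ι)]
    [MeasurableSingletonClass (Finset ι)] {Γ : 𝒳 → Finset ι} (hΓ : Measurable Γ) :
    Integrable (fun x => (#(Γ x) : ℝ)) μ :=
  (Integrable.of_finite (f := fun A : Finset ι => (#A : ℝ))).comp_measurable hΓ

theorem pointwise_error_control_oracle_general
    {𝒳 : Type*} [m𝒳 : MeasurableSpace 𝒳] (μ : Measure 𝒳) [IsFiniteMeasure μ]
    {L : ℕ} {p : 𝒳 → Fin L → ℝ} {ε : ℝ} (hε : ε < 1)
    (hfeasible : ∀ x, ∃ B : Finset (Fin L), 1 - ε ≤ ∑ ℓ ∈ B, p x ℓ)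
    {Γstar : 𝒳 → Finset (Fin L)}
    (hΓstarMeas : @Measurable 𝒳 (Finset (Fin L)) m𝒳 ⊤ Γstar)
    (hΓstarCard : ∀ x, #(Γstar x) = kEps L (p x) ε)
    (hΓstarTop : ∀ x, IsTopSet (p x) (Γstar x)) :
    (∀ x, 1 - ε ≤ ∑ ℓ ∈ Γstar x, p x ℓ) ∧
    (∀ Γ : 𝒳 → Finset (Fin L), @Measurable 𝒳 (Finset (Fin L)) m𝒳 ⊤ Γ →
      (∀ x, 1 - ε ≤ ∑ ℓ ∈ Γ x, p x ℓ) →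
      (∀ x, #(Γstar x) ≤ #(Γ x)) ∧
      (∫ x, (#(Γstar x) : ℝ) ∂μ) ≤ ∫ x, (#(Γ x) : ℝ) ∂μ) := by
  let _ : MeasurableSpace (Finset (Fin L)) := ⊤
  refine ⟨fun x => ?_, fun Γ hΓMeas hΓ => ?_⟩
  · obtain ⟨B, hB⟩ := hfeasible x
    rw [(hΓstarTop x).sum_eq_topSum, hΓstarCard]
    exact one_sub_le_topSum_kEps hε hB
  · have card_le (x : 𝒳) : #(Γstar x) ≤ #(Γ x) :=
      (hΓstarCard x).trans_le (kEps_le_card hε (hΓ x))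
    exact ⟨card_le, integral_mono (integrable_card_of_measurable hΓstarMeas)
      (integrable_card_of_measurable hΓMeas) fun x => Nat.cast_le.2 (card_le x)⟩

/-- the classifier predicting the `k_ε(x)` most probable classes
satisfies the point-wise error constraint and minimizes the point-wise size
(hence the average size) among classifiers satisfying the point-wise error
constraint. -/
theorem pointwise_error_control_oracle
    {𝒳 : Type*} [m𝒳 : MeasurableSpace 𝒳] (μ : Measure 𝒳) [IsProbabilityMeasure μ]
    (L : ℕ) (hL : 1 ≤ L)
    (p : 𝒳 → Fin L → ℝ) (hp : Measurable p)
    (hp0 : ∀ x ℓ, 0 ≤ p x ℓ) (hpsum : ∀ x, ∑ ℓ, p x ℓ = 1)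
    (ε : ℝ) (hε0 : 0 ≤ ε) (hε1 : ε < 1)
    (Γstar : 𝒳 → Finset (Fin L))
    (hΓstarMeas : @Measurable 𝒳 (Finset (Fin L)) m𝒳 ⊤ Γstar)
    (hΓstarCard : ∀ x, (Γstar x).card = kEps L (p x) ε)
    (hΓstarTop : ∀ x, ∀ ℓ ∈ Γstar x, ∀ m, m ∉ Γstar x → p x m ≤ p x ℓ) :
    (∀ x, 1 - ε ≤ ∑ ℓ ∈ Γstar x, p x ℓ) ∧
    (∀ Γ : 𝒳 → Finset (Fin L), @Measurable 𝒳 (Finset (Fin L)) m𝒳 ⊤ Γ →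
      (∀ x, 1 - ε ≤ ∑ ℓ ∈ Γ x, p x ℓ) →
      (∀ x, (Γstar x).card ≤ (Γ x).card) ∧
      (∫ x, ((Γstar x).card : ℝ) ∂μ) ≤ ∫ x, ((Γ x).card : ℝ) ∂μ) := by
  exact pointwise_error_control_oracle_general μ hε1
    (fun x => ⟨univ, (sub_le_self 1 hε0).trans_eq (hpsum x).symm⟩) hΓstarMeas hΓstarCard hΓstarTop
end

section
/- Fix λ ≥ 0 and define the set-valued classifier Γ*_λ by Γ*_λ(x) = {ℓ ∈ Fin L : p_ℓ(x) ≥ λ} for every x ∈ 𝒳. Then Γ*_λ minimizes the penalized risk: for every set-valued classifier Γ, error(Γ*_λ) + λ·size(Γ*_λ) ≤ error(Γ) + λ·size(Γ). -/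
open MeasureTheory Finset

/-! The penalized risk of `Γ` is the integral of `1 - ∑ ℓ ∈ Γ x, (p x ℓ - lam)`, so it can be
minimized separately at each `x`, and there the best choice is to keep exactly the labels whose
contribution `p x ℓ - lam` is nonnegative. -/

lemma sum_le_sum_filter_nonneg {ι M : Type*} [AddCommMonoid M] [LinearOrder M]
    [IsOrderedAddMonoid M] {s t : Finset ι} (hst : s ⊆ t) (f : ι → M) :
    ∑ i ∈ s, f i ≤ ∑ i ∈ t with 0 ≤ f i, f i :=
  calc ∑ i ∈ s, f i
      ≤ ∑ i ∈ s, if 0 ≤ f i then f i else 0 := by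
        refine sum_le_sum fun i _ => ?_
        split_ifs with hi
        exacts [le_rfl, (not_le.mp hi).le]
    _ = ∑ i ∈ s with 0 ≤ f i, f i := (sum_filter _ _).symm
    _ ≤ ∑ i ∈ t with 0 ≤ f i, f i :=
        sum_le_sum_of_subset_of_nonneg (filter_subset_filter _ hst)
          fun i hi _ => (mem_filter.mp hi).2

section SetValuedClassifier

variable {𝒳 ι : Type*}

/-- The set-valued classifier `Γ*_lam` that keeps the labels of score at least `lam`. -/
noncomputable def thresholdClassifier [Fintype ι] (p : 𝒳 → ι → ℝ) (lam : ℝ) (x : 𝒳) : Finset ι :=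
  {ℓ | lam ≤ p x ℓ}

lemma sum_sub_le_sum_thresholdClassifier_sub [Fintype ι] (p : 𝒳 → ι → ℝ) (lam : ℝ)
    (x : 𝒳) (s : Finset ι) :
    ∑ ℓ ∈ s, (p x ℓ - lam) ≤ ∑ ℓ ∈ thresholdClassifier p lam x, (p x ℓ - lam) := by
  simpa [thresholdClassifier] using sum_le_sum_filter_nonneg s.subset_univ (p x · - lam)

variable [MeasurableSpace 𝒳] {μ : Measure 𝒳} {p : 𝒳 → ι → ℝ} {Γ : 𝒳 → Finset ι}

lemma nullMeasurableSet_mem_thresholdClassifier [Fintype ι] {ℓ : ι}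
    (hp : AEMeasurable (p · ℓ) μ) (lam : ℝ) :
    NullMeasurableSet {x | ℓ ∈ thresholdClassifier p lam x} μ := by
  simpa [thresholdClassifier] using nullMeasurableSet_le aemeasurable_const hp

lemma integrable_sum_mem [Finite ι] {E : Type*} [NormedAddCommGroup E] {f : 𝒳 → ι → E}
    (hf : ∀ i, Integrable (f · i) μ) (hΓ : ∀ i, NullMeasurableSet {x | i ∈ Γ x} μ) :
    Integrable (fun x => ∑ i ∈ Γ x, f x i) μ := by
  classical
  have := Fintype.ofFinite ι
  have sum_eq_sum_indicator (x : 𝒳) :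
      ∑ i ∈ Γ x, f x i = ∑ i, {x | i ∈ Γ x}.indicator (f · i) x := by
    simp [Set.indicator_apply]
  simp only [sum_eq_sum_indicator]
  exact integrable_finsetSum _ fun i _ => (hf i).indicator₀ (hΓ i)

lemma integrable_card [Finite ι] [IsFiniteMeasure μ]
    (hΓ : ∀ i, NullMeasurableSet {x | i ∈ Γ x} μ) :
    Integrable (fun x => (#(Γ x) : ℝ)) μ := by
  simpa using integrable_sum_mem (fun _ => integrable_const (1 : ℝ)) hΓ

/-- The risk `error(Γ) + lam * size(Γ)` of a set-valued classifier `Γ`, where `p x ℓ` is the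
conditional probability of the label `ℓ` given the feature `x`. No normalization of `p` or `μ` is
built in, so `p` may be any family of scores. -/
noncomputable def penalizedRisk (μ : Measure 𝒳) (p : 𝒳 → ι → ℝ) (lam : ℝ)
    (Γ : 𝒳 → Finset ι) : ℝ :=
  (∫ x, (1 - ∑ ℓ ∈ Γ x, p x ℓ) ∂μ) + lam * ∫ x, (#(Γ x) : ℝ) ∂μ

lemma integrable_one_sub_sum_sub [Finite ι] [IsFiniteMeasure μ]
    (hp : ∀ ℓ, Integrable (p · ℓ) μ)
    (hΓ : ∀ ℓ, NullMeasurableSet {x | ℓ ∈ Γ x} μ) (lam : ℝ) :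
    Integrable (fun x => 1 - ∑ ℓ ∈ Γ x, (p x ℓ - lam)) μ :=
  (integrable_const 1).sub <|
    integrable_sum_mem (fun ℓ => (hp ℓ).sub (integrable_const lam)) hΓ

lemma penalizedRisk_eq_integral [Finite ι] [IsFiniteMeasure μ]
    (hp : ∀ ℓ, Integrable (p · ℓ) μ)
    (hΓ : ∀ ℓ, NullMeasurableSet {x | ℓ ∈ Γ x} μ) (lam : ℝ) :
    penalizedRisk μ p lam Γ = ∫ x, (1 - ∑ ℓ ∈ Γ x, (p x ℓ - lam)) ∂μ := by
  have error_integrable : Integrable (fun x => 1 - ∑ ℓ ∈ Γ x, p x ℓ) μ :=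
    (integrable_const 1).sub (integrable_sum_mem hp hΓ)
  have size_integrable : Integrable (fun x => lam * (#(Γ x) : ℝ)) μ :=
    (integrable_card hΓ).const_mul lam
  rw [penalizedRisk, ← integral_const_mul, ← integral_add error_integrable size_integrable]
  congr with x
  rw [sum_sub_distrib, sum_const, nsmul_eq_mul]
  ring

theorem penalized_oracle_general [Fintype ι] [IsFiniteMeasure μ]
    (hp : ∀ ℓ, Integrable (p · ℓ) μ)
    (hΓ : ∀ ℓ, NullMeasurableSet {x | ℓ ∈ Γ x} μ) (lam : ℝ) :
    penalizedRisk μ p lam (thresholdClassifier p lam) ≤ penalizedRisk μ p lam Γ := by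
  have hΓstar (ℓ : ι) : NullMeasurableSet {x | ℓ ∈ thresholdClassifier p lam x} μ :=
    nullMeasurableSet_mem_thresholdClassifier (hp ℓ).aemeasurable lam
  rw [penalizedRisk_eq_integral hp hΓstar, penalizedRisk_eq_integral hp hΓ]
  refine integral_mono (integrable_one_sub_sum_sub hp hΓstar lam)
    (integrable_one_sub_sum_sub hp hΓ lam) fun x => ?_
  exact sub_le_sub_left (sum_sub_le_sum_thresholdClassifier_sub p lam x (Γ x)) 1

end SetValuedClassifier

lemma integrable_of_ae_mem_stdSimplex {𝒳 ι : Type*} [MeasurableSpace 𝒳] [Fintype ι]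
    {μ : Measure 𝒳} [IsFiniteMeasure μ] {p : 𝒳 → ι → ℝ} (hp : AEMeasurable p μ)
    (hmem : ∀ᵐ x ∂μ, p x ∈ stdSimplex ℝ ι) (ℓ : ι) : Integrable (p · ℓ) μ :=
  .of_mem_Icc 0 1 (aemeasurable_pi_iff.mp hp ℓ) <|
    hmem.mono fun _ hx => mem_Icc_of_mem_stdSimplex hx ℓ

/-- the thresholding classifier Γ*_λ(x) = {ℓ : p_ℓ(x) ≥ λ}
minimizes the penalized risk error(Γ) + λ·size(Γ). -/
theorem penalized_oracle
    {𝒳 : Type*} [m𝒳 : MeasurableSpace 𝒳] (μ : Measure 𝒳) [IsProbabilityMeasure μ]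
    (L : ℕ) (hL : 1 ≤ L)
    (p : 𝒳 → Fin L → ℝ) (hp : Measurable p)
    (hp0 : ∀ x ℓ, 0 ≤ p x ℓ) (hpsum : ∀ x, ∑ ℓ, p x ℓ = 1)
    (lam : ℝ) (hlam : 0 ≤ lam)
    (Γstar : 𝒳 → Finset (Fin L))
    (hΓstar : ∀ x, Γstar x = Finset.univ.filter (fun ℓ => lam ≤ p x ℓ))
    (Γ : 𝒳 → Finset (Fin L))
    (hΓMeas : @Measurable 𝒳 (Finset (Fin L)) m𝒳 ⊤ Γ) :
    (∫ x, (1 - ∑ ℓ ∈ Γstar x, p x ℓ) ∂μ) + lam * ∫ x, ((Γstar x).card : ℝ) ∂μ ≤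
      (∫ x, (1 - ∑ ℓ ∈ Γ x, p x ℓ) ∂μ) + lam * ∫ x, ((Γ x).card : ℝ) ∂μ := by
  obtain rfl : Γstar = thresholdClassifier p lam := funext hΓstar
  exact penalized_oracle_general
    (integrable_of_ae_mem_stdSimplex hp.aemeasurable <| .of_forall fun x => ⟨hp0 x, hpsum x⟩)
    (fun ℓ => (hΓMeas (t := {s | ℓ ∈ s}) trivial).nullMeasurableSet) lam
end
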